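/- Let n ≥ 1, let V₁,…,V_{n+1} ∈ ℂ^g satisfy Σ_{k=1}^{n+1} V_k = 0, and let W ∈ ℂ^g. For each j = 1,…,n let r_j ∈ ℂ^g and K₁ⱼ, K₂ⱼ, q₁ⱼ, q₂ⱼ ∈ ℂ, and assume the degenerate Fay identity holds for (V_{n+1}, W, r_j, K₁ⱼ, K₂ⱼ) and the bilinear Fay identity holds for (V_{n+1}, V_j, r_j, q₁ⱼ, q₂ⱼ). Let d ∈ ℂ^g and A_j ∈ ℂ∖{0}, and set Z(x,t) = iV_{n+1}x + iWt, E_j = K₁ⱼ, F_j = K₂ⱼ − 2Σ_{k=1}^n q₁ₖ, ψ_j(x,t) = A_j·Θ(Z−d+r_j)/Θ(Z−d)·exp(i(−E_jx + F_jt)), ψ*_j(x,t) = (q₂ⱼ/A_j)·Θ(Z−d−r_j)/Θ(Z−d)·exp(i(E_jx − F_jt)). Then on the open set of (x,t) ∈ ℝ² where Θ(Z(x,t)−d) ≠ 0, for each j = 1,…,n: i∂_tψ_j + ∂_x²ψ_j + 2(Σ_{k=1}^n ψ_kψ*_k)ψ_j = 0 and −i∂_tψ*_j + ∂_x²ψ*_j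 + 2(Σ_{k=1}^n ψ_kψ*_k)ψ*_j = 0 (the complexified multi-component nonlinear Schrödinger system). -/

import Mathlib

open Complex ComplexConjugate

noncomputable section

/-- Bilinear pairing ⟨u,v⟩ = Σ uᵢ vᵢ (no complex conjugation). -/
def pairC {g : ℕ} (u v : Fin g → ℂ) : ℂ := ∑ i, u i * v i

/-- The Riemann theta function with period matrix `B`. -/
def theta {g : ℕ} (B : Matrix (Fin g) (Fin g) ℂ) (z : Fin g → ℂ) : ℂ :=
  ∑' m : Fin g → ℤ,
    Complex.exp ((1 / 2) * pairC (B.mulVec (fun i => (m i : ℂ))) (fun i => (m i : ℂ))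
      + pairC (fun i => (m i : ℂ)) z)

/-- First logarithmic directional derivative `D_V ln F (z) = D_V F(z) / F(z)`. -/
def logD {g : ℕ} (V : Fin g → ℂ) (F : (Fin g → ℂ) → ℂ) (z : Fin g → ℂ) : ℂ :=
  fderiv ℂ F z V / F z

/-- Second logarithmic directional derivative `D_V² ln F (z) = D_V (D_V ln F) (z)`. -/
def logD2 {g : ℕ} (V : Fin g → ℂ) (F : (Fin g → ℂ) → ℂ) (z : Fin g → ℂ) : ℂ :=
  fderiv ℂ (logD V F) z V

/-- The degenerate Fay identity for the data `(V, W, r, K₁, K₂)`. -/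
def DegFay {g : ℕ} (B : Matrix (Fin g) (Fin g) ℂ) (V W r : Fin g → ℂ)
    (K₁ K₂ : ℂ) : Prop :=
  ∀ z : Fin g → ℂ, theta B z ≠ 0 → theta B (z + r) ≠ 0 →
    logD W (fun w => theta B (w + r) / theta B w) z
      + logD2 V (fun w => theta B (w + r) / theta B w) z
      + (logD V (fun w => theta B (w + r) / theta B w) z - K₁) ^ 2
      + 2 * logD2 V (theta B) z + K₂ = 0

/-- The bilinear (degenerate Fay) identity for the data `(V, V', r, q₁, q₂)`. -/
def BilinFay {g : ℕ} (B : Matrix (Fin g) (Fin g) ℂ) (V V' r : Fin g → ℂ)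
    (q₁ q₂ : ℂ) : Prop :=
  ∀ z : Fin g → ℂ, theta B z ≠ 0 →
    fderiv ℂ (logD V' (theta B)) z V
      = q₁ + q₂ * theta B (z + r) * theta B (z - r) / (theta B z) ^ 2

/-! Multiplied by the quotient `f = θ(· + r)/θ`, the degenerate Fay identity becomes linear in `f`.
Both sides are continuous wherever `θ ≠ 0`, so by density it also holds at the zeros of `f`, and it
says that the plane wave `exp (i (-K₁ x + F t))` modulated by `f` solves a linear Schrödinger
equation with potential `2 D_V² ln θ + const`. As `θ` is even, reversing all directions gives the
dual equation for `θ(· - r)/θ`. The system becomes nonlinear because the potential is itself built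
from the solutions: since the remaining directions sum to `-V`, adding up the bilinear Fay
identities gives `∑ₖ ψₖ ψ*ₖ = -D_V² ln θ - ∑ₖ q₁ₖ`. -/

section ExponentialSeries

open scoped ContDiff

universe u

variable {ι : Type*} {E F : Type u} [NormedAddCommGroup E] [NormedSpace ℂ E]
  [NormedAddCommGroup F] [NormedSpace ℂ F]

/-- The exponential series `z ↦ ∑ₘ exp (ℓₘ z) cₘ` with frequencies `ℓₘ` in the dual of `E`. The
coefficients are vectors, so that the derivative of such a series is again such a series. -/
def expSeries (ℓ : ι → E →L[ℂ] ℂ) (c : ι → F) (z : E) : F := ∑' m, exp (ℓ m z) • c m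

/-- Coefficients that beat every exponential of the frequencies: this is normal convergence of
`expSeries ℓ c` on every bounded set. -/
def RapidlyDecaying (ℓ : ι → E →L[ℂ] ℂ) (c : ι → F) : Prop :=
  ∀ R : ℝ, Summable fun m => Real.exp (R * ‖ℓ m‖) * ‖c m‖

lemma norm_exp_apply_le (ℓ : E →L[ℂ] ℂ) {z : E} {R : ℝ} (hz : ‖z‖ ≤ R) :
    ‖exp (ℓ z)‖ ≤ Real.exp (R * ‖ℓ‖) := by
  rw [norm_exp, Real.exp_le_exp]
  exact (re_le_norm _).trans <| (ℓ.le_opNorm_of_le hz).trans_eq (mul_comm _ _)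

lemma hasFDerivAt_exp_smul (ℓ : E →L[ℂ] ℂ) (c : F) (z : E) :
    HasFDerivAt (fun w => exp (ℓ w) • c) (exp (ℓ z) • ℓ.smulRight c) z := by
  refine (ℓ.hasFDerivAt.cexp.smul_const c).congr_fderiv ?_
  ext v
  simp [mul_smul]

namespace RapidlyDecaying

variable {ℓ : ι → E →L[ℂ] ℂ} {c : ι → F}

lemma smulRight (hc : RapidlyDecaying ℓ c) :
    RapidlyDecaying ℓ fun m => (ℓ m).smulRight (c m) := by
  intro R
  refine (hc (R + 1)).of_nonneg_of_le (fun m => by positivity) fun m => ?_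
  have hexp : ‖ℓ m‖ ≤ Real.exp ‖ℓ m‖ := by linarith [Real.add_one_le_exp ‖ℓ m‖]
  rw [ContinuousLinearMap.norm_smulRight_apply, add_mul, one_mul, Real.exp_add, mul_assoc]
  gcongr

lemma summable [CompleteSpace F] (hc : RapidlyDecaying ℓ c) (z : E) :
    Summable fun m => exp (ℓ m z) • c m := by
  refine (hc ‖z‖).of_norm_bounded fun m => ?_
  rw [norm_smul]
  gcongr
  exact norm_exp_apply_le _ le_rfl

lemma hasFDerivAt [CompleteSpace F] (hc : RapidlyDecaying ℓ c) (z : E) :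
    HasFDerivAt (expSeries ℓ c) (expSeries ℓ (fun m => (ℓ m).smulRight (c m)) z) z := by
  have hz : z ∈ Metric.ball (0 : E) (‖z‖ + 1) := by simp
  refine hasFDerivAt_tsum_of_isPreconnected (hc.smulRight (‖z‖ + 1)) Metric.isOpen_ball
    Metric.isPreconnected_ball (fun m w _ => hasFDerivAt_exp_smul (ℓ m) (c m) w)
    (fun m w hw => ?_) hz (hc.summable z) hz
  rw [norm_smul]
  gcongr
  exact norm_exp_apply_le _ (mem_ball_zero_iff.1 hw).le

lemma contDiff_nat (n : ℕ) : ∀ {F : Type u} [NormedAddCommGroup F] [NormedSpace ℂ F]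
    [CompleteSpace F] {c : ι → F}, RapidlyDecaying ℓ c → ContDiff ℂ n (expSeries ℓ c) := by
  induction n with
  | zero =>
    intro F _ _ _ c hc
    exact contDiff_zero.2 (continuous_iff_continuousAt.2 fun z => (hc.hasFDerivAt z).continuousAt)
  | succ n ih =>
    intro F _ _ _ c hc
    exact contDiff_succ_iff_hasFDerivAt.2 ⟨_, ih hc.smulRight, hc.hasFDerivAt⟩

lemma contDiff [CompleteSpace F] (hc : RapidlyDecaying ℓ c) : ContDiff ℂ ∞ (expSeries ℓ c) :=
  contDiff_infty.2 fun n => hc.contDiff_nat n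

end RapidlyDecaying

end ExponentialSeries

section Gaussian

variable {E : Type*} [NormedAddCommGroup E] [NormedSpace ℝ E] [FiniteDimensional ℝ E]

lemma exists_pos_forall_mul_norm_sq_le {q : E → ℝ} (hq : Continuous q)
    (hsmul : ∀ (a : ℝ) (x : E), q (a • x) = a ^ 2 * q x) (hpos : ∀ x ≠ 0, 0 < q x) :
    ∃ δ > 0, ∀ x, δ * ‖x‖ ^ 2 ≤ q x := by
  obtain ⟨δ, hδ, hmin⟩ := (isCompact_sphere (0 : E) 1).exists_forall_le' hq.continuousOn
    fun x hx => hpos x (ne_zero_of_mem_unit_sphere ⟨x, hx⟩)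
  refine ⟨δ, hδ, fun x => ?_⟩
  rcases eq_or_ne x 0 with rfl | hx
  · simpa using (hsmul 0 0).ge
  · have hnorm : ‖x‖ ≠ 0 := norm_ne_zero_iff.2 hx
    have hunit : δ ≤ q (‖x‖⁻¹ • x) := hmin _ (by simp [norm_smul, hnorm])
    calc δ * ‖x‖ ^ 2 ≤ q (‖x‖⁻¹ • x) * ‖x‖ ^ 2 := by gcongr
      _ = q x := by rw [hsmul]; field_simp

lemma summable_exp_neg_mul_norm_sq_add_mul_norm (L : Submodule ℤ E) [DiscreteTopology L] {δ : ℝ}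
    (hδ : 0 < δ) (R : ℝ) :
    Summable fun v : L => Real.exp (-δ * ‖(v : E)‖ ^ 2 + R * ‖(v : E)‖) := by
  have hnorm : Filter.Tendsto (fun v : L => ‖(v : E)‖) Filter.cofinite Filter.atTop :=
    (tendsto_norm_cocompact_atTop (E := E)).comp
      (L.toAddSubgroup.tendsto_coe_cofinite_of_discrete ⟨‹DiscreteTopology L›⟩)
  exact summable_of_isBigO (ZLattice.summable_norm_rpow L (-Module.finrank ℤ L - 1) (by linarith))
    ((rexp_neg_quadratic_isLittleO_rpow_atTop (neg_neg_of_pos hδ) R _).isBigO.comp_tendsto hnorm)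

end Gaussian

section Theta

open scoped ContDiff

variable {g : ℕ}

/-- The integer vector `m`, seen as the linear form `z ↦ ⟨m, z⟩` on `ℂ^g`. -/
def intForm (m : Fin g → ℤ) : (Fin g → ℂ) →L[ℂ] ℂ :=
  ∑ i, (m i : ℂ) • ContinuousLinearMap.proj i

lemma intForm_apply (m : Fin g → ℤ) (z : Fin g → ℂ) :
    intForm m z = pairC (fun i => (m i : ℂ)) z := by
  simp [intForm, pairC]

lemma norm_intForm_le (m : Fin g → ℤ) : ‖intForm m‖ ≤ g * ‖fun i => (m i : ℝ)‖ := by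
  refine ContinuousLinearMap.opNorm_le_bound _ (by positivity) fun z => ?_
  calc ‖intForm m z‖ ≤ ∑ i, ‖(m i : ℂ) * z i‖ := by
        rw [intForm_apply]
        exact norm_sum_le _ _
    _ ≤ ∑ _i : Fin g, ‖fun i => (m i : ℝ)‖ * ‖z‖ := by
        gcongr with i
        rw [norm_mul, norm_intCast]
        gcongr
        · exact norm_le_pi_norm (fun i => (m i : ℝ)) i
        · exact norm_le_pi_norm z i
    _ = g * ‖fun i => (m i : ℝ)‖ * ‖z‖ := by simp [mul_assoc]

/-- The coefficients `exp (⟨B m, m⟩ / 2)` of the Riemann theta function. -/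
def thetaCoeff (B : Matrix (Fin g) (Fin g) ℂ) (m : Fin g → ℤ) : ℂ :=
  exp ((1 / 2) * pairC (B.mulVec fun i => (m i : ℂ)) fun i => (m i : ℂ))

lemma theta_eq_expSeries (B : Matrix (Fin g) (Fin g) ℂ) :
    theta B = expSeries intForm (thetaCoeff B) := by
  funext z
  simp only [theta, expSeries, thetaCoeff, exp_add, intForm_apply, smul_eq_mul, mul_comm]

lemma norm_thetaCoeff (B : Matrix (Fin g) (Fin g) ℂ) (m : Fin g → ℤ) :
    ‖thetaCoeff B m‖ = Real.exp ((∑ i, ∑ j, (B i j).re * m i * m j) / 2) := by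
  have hre : (pairC (B.mulVec fun i => (m i : ℂ)) fun i => (m i : ℂ)).re
      = ∑ i, ∑ j, (B i j).re * m i * m j := by
    simp only [pairC, Matrix.mulVec, dotProduct, re_sum, Finset.sum_mul]
    refine Finset.sum_congr rfl fun i _ => Finset.sum_congr rfl fun j _ => ?_
    simp [mul_right_comm]
  rw [thetaCoeff, norm_exp, ← hre]
  simp [div_eq_inv_mul]

lemma summable_exp_neg_mul_norm_sq_intCast {δ : ℝ} (hδ : 0 < δ) (R : ℝ) :
    Summable fun m : Fin g → ℤ =>
      Real.exp (-δ * ‖fun i => (m i : ℝ)‖ ^ 2 + R * ‖fun i => (m i : ℝ)‖) := by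
  let L := Submodule.span ℤ (Set.range (Pi.basisFun ℝ (Fin g)))
  let toL (m : Fin g → ℤ) : L := ⟨fun i => (m i : ℝ),
    (Pi.basisFun ℝ (Fin g)).mem_span_iff_repr_mem ℤ _ |>.2 fun i => ⟨m i, by simp⟩⟩
  have hinj : Function.Injective toL := fun m m' h =>
    funext fun i => Int.cast_injective (congrFun (congrArg Subtype.val h) i)
  simpa only [Function.comp_def] using
    (summable_exp_neg_mul_norm_sq_add_mul_norm L hδ R).comp_injective hinj

lemma rapidlyDecaying_thetaCoeff {B : Matrix (Fin g) (Fin g) ℂ}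
    (hB : ∀ x : Fin g → ℝ, x ≠ 0 → ∑ i, ∑ j, (B i j).re * x i * x j < 0) :
    RapidlyDecaying intForm (thetaCoeff B) := by
  intro R
  obtain ⟨δ, hδ, hle⟩ := exists_pos_forall_mul_norm_sq_le
    (q := fun x : Fin g → ℝ => -∑ i, ∑ j, (B i j).re * x i * x j) (by fun_prop)
    (fun a x => by
      simp only [Pi.smul_apply, smul_eq_mul, mul_neg, Finset.mul_sum]
      refine congrArg _ (Finset.sum_congr rfl fun i _ => Finset.sum_congr rfl fun j _ => ?_)
      ring)
    fun x hx => neg_pos.2 (hB x hx)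
  refine (summable_exp_neg_mul_norm_sq_intCast (half_pos hδ) (|R| * g)).of_nonneg_of_le
    (fun m => by positivity) fun m => ?_
  rw [norm_thetaCoeff, ← Real.exp_add, Real.exp_le_exp, add_comm]
  have hform : R * ‖intForm m‖ ≤ |R| * g * ‖fun i => (m i : ℝ)‖ := by
    rw [mul_assoc]
    exact mul_le_mul (le_abs_self R) (norm_intForm_le m) (norm_nonneg _) (abs_nonneg R)
  linarith [hle fun i => (m i : ℝ)]

lemma contDiff_theta {B : Matrix (Fin g) (Fin g) ℂ}
    (hB : ∀ x : Fin g → ℝ, x ≠ 0 → ∑ i, ∑ j, (B i j).re * x i * x j < 0) :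
    ContDiff ℂ ∞ (theta B) := by
  rw [theta_eq_expSeries]
  exact (rapidlyDecaying_thetaCoeff hB).contDiff

lemma even_theta (B : Matrix (Fin g) (Fin g) ℂ) : (theta B).Even := by
  intro z
  unfold theta
  rw [← (Equiv.neg (Fin g → ℤ)).tsum_eq]
  refine tsum_congr fun m => ?_
  have hneg : (fun i => ((Equiv.neg (Fin g → ℤ) m i : ℤ) : ℂ)) = -fun i => (m i : ℂ) := by
    funext i
    simp
  rw [hneg, Matrix.mulVec_neg]
  simp [pairC]

end Theta

section FayIdentities

variable {E : Type*} [NormedAddCommGroup E] [NormedSpace ℂ E]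

/-- The logarithmic directional derivative `D_V ln f`; `logD` is the case `E = ℂ^g`. It is `0` by
convention where `f` vanishes. -/
def logDirDeriv (V : E) (f : E → ℂ) (z : E) : ℂ := fderiv ℂ f z V / f z

/-- The quotient `θ (· + r) / θ` in which the Fay identities are formulated. -/
def translateQuotient (θ : E → ℂ) (r z : E) : ℂ := θ (z + r) / θ z

/-- The degenerate Fay identity `DegFay` for an arbitrary function `θ` in place of the Riemann theta
function. -/
def DegenerateFay (θ : E → ℂ) (V W r : E) (K₁ K₂ : ℂ) : Prop :=
  ∀ z, θ z ≠ 0 → θ (z + r) ≠ 0 →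
    logDirDeriv W (translateQuotient θ r) z
      + fderiv ℂ (logDirDeriv V (translateQuotient θ r)) z V
      + (logDirDeriv V (translateQuotient θ r) z - K₁) ^ 2
      + 2 * fderiv ℂ (logDirDeriv V θ) z V + K₂ = 0

/-- The bilinear Fay identity `BilinFay` for an arbitrary function `θ` in place of the Riemann theta
function. -/
def BilinearFay (θ : E → ℂ) (V V' r : E) (q₁ q₂ : ℂ) : Prop :=
  ∀ z, θ z ≠ 0 →
    fderiv ℂ (logDirDeriv V' θ) z V = q₁ + q₂ * θ (z + r) * θ (z - r) / θ z ^ 2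

variable {f θ : E → ℂ} {z r U V W : E} {K₁ K₂ : ℂ} {n : WithTop ℕ∞}

lemma contDiffAt_translateQuotient (hθ : ContDiff ℂ n θ) (r : E) (hz : θ z ≠ 0) :
    ContDiffAt ℂ n (translateQuotient θ r) z :=
  (hθ.comp (contDiff_id.add contDiff_const)).contDiffAt.div hθ.contDiffAt hz

lemma contDiffAt_logDirDeriv (hf : ContDiffAt ℂ (n + 1) f z) (hz : f z ≠ 0) :
    ContDiffAt ℂ n (logDirDeriv V f) z :=
  ((hf.fderiv_right le_rfl).clm_apply contDiffAt_const).div (hf.of_le le_self_add) hz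

lemma fderiv_logDirDeriv (hf : ContDiffAt ℂ 2 f z) (hz : f z ≠ 0) :
    fderiv ℂ (logDirDeriv V f) z U
      = fderiv ℂ (fderiv ℂ f) z U V / f z - fderiv ℂ f z V * fderiv ℂ f z U / f z ^ 2 := by
  have hderiv : DifferentiableAt ℂ (fderiv ℂ f) z :=
    (hf.fderiv_right (m := 1) le_rfl).differentiableAt one_ne_zero
  have hnum : HasFDerivAt (fun w => fderiv ℂ f w V) ((fderiv ℂ (fderiv ℂ f) z).flip V) z := by
    simpa using hderiv.hasFDerivAt.clm_apply (hasFDerivAt_const V z)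
  have hinv : HasFDerivAt (fun w => (f w)⁻¹) (-(f z ^ 2)⁻¹ • fderiv ℂ f z) z :=
    (hasDerivAt_inv hz).comp_hasFDerivAt z (hf.differentiableAt two_ne_zero).hasFDerivAt
  have hquot : logDirDeriv V f = fun w => fderiv ℂ f w V * (f w)⁻¹ :=
    funext fun w => div_eq_mul_inv _ _
  rw [hquot, (hnum.fun_mul hinv).fderiv]
  simp only [add_apply, smul_apply, smul_eq_mul, ContinuousLinearMap.flip_apply]
  ring

lemma dense_setOf_ne_zero (hf : Differentiable ℂ f) (hz : f z ≠ 0) : Dense {w | f w ≠ 0} := by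
  intro p
  rw [mem_closure_iff_frequently]
  by_contra hp
  have hzero : ∀ᶠ w in nhds p, f w = 0 := by
    simpa only [Set.mem_ofPred_eq, Filter.not_frequently, not_not] using hp
  let line : ℂ → E := fun s => p + s • (z - p)
  have hline : Differentiable ℂ line := by fun_prop
  have hanalytic : AnalyticOnNhd ℂ (f ∘ line) Set.univ :=
    (hf.comp hline).differentiableOn.analyticOnNhd isOpen_univ
  have hline0 : Filter.Tendsto line (nhds 0) (nhds p) := by
    simpa [line] using hline.continuous.tendsto 0
  have hone : f (line 1) = 0 := hanalytic.eqOn_zero_of_preconnected_of_eventuallyEq_zero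
    isPreconnected_univ (Set.mem_univ 0) (hline0.eventually hzero) (Set.mem_univ 1)
  exact hz (by simpa [line] using hone)

lemma fderiv_comp_neg {F : Type*} [NormedAddCommGroup F] [NormedSpace ℂ F] (f : E → F) (z : E) :
    fderiv ℂ (fun w => f (-w)) z = -fderiv ℂ f (-z) := by
  simpa using fderiv_comp_smul (𝕜 := ℂ) (f := f) (x := z) (-1)

lemma logDirDeriv_comp_neg (V : E) (f : E → ℂ) :
    logDirDeriv (-V) (fun w => f (-w)) = fun w => logDirDeriv V f (-w) := by
  funext w
  simp [logDirDeriv, fderiv_comp_neg]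

/-- The left-hand side of the degenerate Fay identity multiplied by `f = translateQuotient θ r`. It
is linear in `f` and, unlike the identity itself, regular at the zeros of `f`. -/
def linearizedFay (θ : E → ℂ) (V W r : E) (K₁ K₂ : ℂ) (z : E) : ℂ :=
  fderiv ℂ (translateQuotient θ r) z W
    + fderiv ℂ (fderiv ℂ (translateQuotient θ r)) z V V
    - 2 * K₁ * fderiv ℂ (translateQuotient θ r) z V
    + (K₁ ^ 2 + 2 * fderiv ℂ (logDirDeriv V θ) z V + K₂) * translateQuotient θ r z

lemma continuousAt_linearizedFay (hθ : ContDiff ℂ 2 θ) (hz : θ z ≠ 0) :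
    ContinuousAt (linearizedFay θ V W r K₁ K₂) z := by
  have hquot := contDiffAt_translateQuotient hθ r hz
  have hfderiv : ContDiffAt ℂ 1 (fderiv ℂ (translateQuotient θ r)) z := hquot.fderiv_right le_rfl
  have hfderiv₂ : ContinuousAt (fderiv ℂ (fderiv ℂ (translateQuotient θ r))) z :=
    (hfderiv.fderiv_right (m := 0) (by simp)).continuousAt
  have hlog : ContinuousAt (fderiv ℂ (logDirDeriv V θ)) z :=
    ((contDiffAt_logDirDeriv (n := 1) hθ.contDiffAt hz).fderiv_right (m := 0)
      (by simp)).continuousAt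
  have h₀ := hquot.continuousAt
  have h₁ := hfderiv.continuousAt
  unfold linearizedFay
  fun_prop

namespace DegenerateFay

lemma linearizedFay_eq_zero_of_ne_zero (h : DegenerateFay θ V W r K₁ K₂) (hθ : ContDiff ℂ 2 θ)
    (hz : θ z ≠ 0) (hzr : θ (z + r) ≠ 0) : linearizedFay θ V W r K₁ K₂ z = 0 := by
  have hquot : translateQuotient θ r z ≠ 0 := div_ne_zero hzr hz
  have hfay := h z hz hzr
  rw [fderiv_logDirDeriv (contDiffAt_translateQuotient hθ r hz) hquot] at hfay
  simp only [logDirDeriv] at hfay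
  rw [linearizedFay, ← mul_zero (translateQuotient θ r z), ← hfay]
  field_simp
  ring

lemma linearizedFay_eq_zero (h : DegenerateFay θ V W r K₁ K₂) (hθ : ContDiff ℂ 2 θ)
    (hz : θ z ≠ 0) : linearizedFay θ V W r K₁ K₂ z = 0 := by
  by_contra hne
  have hdense : Dense {w | θ (w + r) ≠ 0} :=
    dense_setOf_ne_zero (z := z - r) ((hθ.differentiable two_ne_zero).comp (by fun_prop))
      (by simpa using hz)
  have hnear : ∀ᶠ w in nhds z, linearizedFay θ V W r K₁ K₂ w ≠ 0 ∧ θ w ≠ 0 :=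
    ((continuousAt_linearizedFay hθ hz).eventually_ne hne).and
      (hθ.continuous.continuousAt.eventually_ne hz)
  obtain ⟨w, hwr, hwne, hw⟩ :=
    ((mem_closure_iff_frequently.1 (hdense z)).and_eventually hnear).exists
  exact hwne (h.linearizedFay_eq_zero_of_ne_zero hθ hw hwr)

lemma neg (h : DegenerateFay θ V W r K₁ K₂) (hθ : θ.Even) :
    DegenerateFay θ (-V) (-W) (-r) K₁ K₂ := by
  have hθ' : θ = fun w => θ (-w) := funext fun w => (hθ w).symm
  have hquot : translateQuotient θ (-r) = fun w => translateQuotient θ r (-w) := by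
    funext w
    simp only [translateQuotient, hθ w]
    rw [← hθ (w + -r), neg_add, neg_neg]
  have hlogθ : logDirDeriv (-V) θ = fun w => logDirDeriv V θ (-w) := by
    rw [hθ', logDirDeriv_comp_neg, ← hθ']
  intro z hz hzr
  have hfay := h (-z) (by rwa [hθ]) (by rwa [← hθ, neg_add, neg_neg])
  rw [hquot, hlogθ, logDirDeriv_comp_neg, logDirDeriv_comp_neg]
  simpa [fderiv_comp_neg] using hfay

end DegenerateFay

lemma sum_fderiv_logDirDeriv {ι : Type*} [Fintype ι] {V : ι → E} (hf : ContDiffAt ℂ 2 f z)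
    (hz : f z ≠ 0) :
    ∑ k, fderiv ℂ (logDirDeriv (V k) f) z U = fderiv ℂ (logDirDeriv (∑ k, V k) f) z U := by
  simp only [fderiv_logDirDeriv hf hz, Finset.sum_sub_distrib, map_sum, Finset.sum_div,
    Finset.sum_mul]

lemma fderiv_logDirDeriv_neg : fderiv ℂ (logDirDeriv (-V) f) z = -fderiv ℂ (logDirDeriv V f) z := by
  rw [← fderiv_fun_neg]
  congr 1
  funext w
  simp [logDirDeriv, neg_div]

lemma sum_translateQuotient_mul_translateQuotient_neg {ι : Type*} [Fintype ι] {V₀ : E}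
    {V r : ι → E} {q₁ q₂ : ι → ℂ} (hθ : ContDiff ℂ 2 θ) (hV : ∑ k, V k + V₀ = 0)
    (h : ∀ k, BilinearFay θ V₀ (V k) (r k) (q₁ k) (q₂ k)) (hz : θ z ≠ 0) :
    ∑ k, q₂ k * (translateQuotient θ (r k) z * translateQuotient θ (-r k) z)
      = -fderiv ℂ (logDirDeriv V₀ θ) z V₀ - ∑ k, q₁ k := by
  have hterm (k : ι) : q₂ k * (translateQuotient θ (r k) z * translateQuotient θ (-r k) z)
      = fderiv ℂ (logDirDeriv (V k) θ) z V₀ - q₁ k := by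
    rw [h k z hz, translateQuotient, translateQuotient, ← sub_eq_add_neg]
    field_simp
    ring
  rw [Finset.sum_congr rfl fun k _ => hterm k, Finset.sum_sub_distrib,
    sum_fderiv_logDirDeriv hθ.contDiffAt hz, eq_neg_of_add_eq_zero_left hV, fderiv_logDirDeriv_neg,
    neg_apply]

end FayIdentities

section ModulatedWaves

variable {E : Type*} [NormedAddCommGroup E] [NormedSpace ℂ E]

/-- The linear phase `i V x + i W t - d` at which the profile of a wave is evaluated. -/
def wavePhase (V W d : E) (x t : ℝ) : E := (x : ℂ) • I • V + (t : ℂ) • I • W - d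

/-- The plane wave `a exp (i (k x + ω t))` modulated by the profile `f` along `wavePhase V W d`. -/
def modulatedWave (a : ℂ) (f : E → ℂ) (V W d : E) (k ω : ℂ) (x t : ℝ) : ℂ :=
  a * f (wavePhase V W d x t) * exp (I * (k * x + ω * t))

variable {f h θ : E → ℂ} {V W d r : E} {a b k ω K₁ K₂ : ℂ} {x t : ℝ}

lemma modulatedWave_swap :
    modulatedWave a f V W d k ω x t = modulatedWave a f W V d ω k t x := by
  simp only [modulatedWave, wavePhase, add_comm]

lemma modulatedWave_mul_modulatedWave_neg :
    modulatedWave a f V W d k ω x t * modulatedWave b h V W d (-k) (-ω) x t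
      = a * b * (f (wavePhase V W d x t) * h (wavePhase V W d x t)) := by
  have hexp : exp (I * (k * x + ω * t)) * exp (I * (-k * x + -ω * t)) = 1 := by
    rw [← exp_add, ← exp_zero]
    ring_nf
  simp only [modulatedWave]
  linear_combination
    a * b * f (wavePhase V W d x t) * h (wavePhase V W d x t) * hexp

lemma hasDerivAt_modulatedWave_space (hf : DifferentiableAt ℂ f (wavePhase V W d x t)) :
    HasDerivAt (fun x' => modulatedWave a f V W d k ω x' t)
      (modulatedWave (I * a) (fun w => fderiv ℂ f w V + k * f w) V W d k ω x t) x := by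
  have hphase : HasDerivAt (fun s : ℂ => s • I • V + (t : ℂ) • I • W - d) (I • V) x := by
    simpa using
      (((hasDerivAt_id (x : ℂ)).smul_const (I • V)).add_const ((t : ℂ) • I • W)).sub_const d
  have hexp : HasDerivAt (fun s : ℂ => exp (I * (k * s + ω * t)))
      (exp (I * (k * x + ω * t)) * (I * k)) x := by
    simpa using ((((hasDerivAt_id (x : ℂ)).const_mul k).add_const (ω * t)).const_mul I).cexp
  refine (((hf.hasFDerivAt.comp_hasDerivAt (x : ℂ) hphase).const_mul a).mul hexp).comp_ofReal
    |>.congr_deriv ?_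
  simp only [modulatedWave, wavePhase, map_smul, smul_eq_mul, Function.comp_apply]
  ring

lemma hasDerivAt_modulatedWave_time (hf : DifferentiableAt ℂ f (wavePhase V W d x t)) :
    HasDerivAt (fun t' => modulatedWave a f V W d k ω x t')
      (modulatedWave (I * a) (fun w => fderiv ℂ f w W + ω * f w) V W d k ω x t) t := by
  simp only [modulatedWave_swap (V := V)]
  exact hasDerivAt_modulatedWave_space (by rwa [wavePhase, add_comm])

lemma deriv_deriv_modulatedWave_space (hf : ContDiffAt ℂ 2 f (wavePhase V W d x t)) :
    deriv (fun x' => deriv (fun x'' => modulatedWave a f V W d k ω x'' t) x') x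
      = modulatedWave (-a)
          (fun w => fderiv ℂ (fderiv ℂ f) w V V + 2 * k * fderiv ℂ f w V + k ^ 2 * f w)
          V W d k ω x t := by
  have hphase : ContinuousAt (fun x' => wavePhase V W d x' t) x := by
    unfold wavePhase
    fun_prop
  have hfirst : (fun x' => deriv (fun x'' => modulatedWave a f V W d k ω x'' t) x') =ᶠ[nhds x]
      fun x' => modulatedWave (I * a) (fun w => fderiv ℂ f w V + k * f w) V W d k ω x' t := by
    filter_upwards [hphase.eventually (hf.eventually (by simp))] with x' hx'
    exact (hasDerivAt_modulatedWave_space (hx'.differentiableAt two_ne_zero)).deriv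
  have hfderiv : DifferentiableAt ℂ (fderiv ℂ f) (wavePhase V W d x t) :=
    (hf.fderiv_right (m := 1) le_rfl).differentiableAt one_ne_zero
  have hprofile : HasFDerivAt (fun w => fderiv ℂ f w V + k * f w)
      ((fderiv ℂ (fderiv ℂ f) (wavePhase V W d x t)).flip V
        + k • fderiv ℂ f (wavePhase V W d x t)) (wavePhase V W d x t) := by
    simpa using (hfderiv.hasFDerivAt.clm_apply (hasFDerivAt_const V _)).fun_add
      ((hf.differentiableAt two_ne_zero).hasFDerivAt.const_mul k)
  rw [hfirst.deriv_eq, (hasDerivAt_modulatedWave_space hprofile.differentiableAt).deriv]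
  simp only [modulatedWave, hprofile.fderiv, add_apply, smul_apply,
    ContinuousLinearMap.flip_apply, smul_eq_mul]
  linear_combination (a * (fderiv ℂ (fderiv ℂ f) (wavePhase V W d x t) V V
    + 2 * k * fderiv ℂ f (wavePhase V W d x t) V + k ^ 2 * f (wavePhase V W d x t))
    * exp (I * (k * x + ω * t))) * I_sq

end ModulatedWaves

section Schrodinger

variable {E : Type*} [NormedAddCommGroup E] [NormedSpace ℂ E]

namespace DegenerateFay

variable {θ : E → ℂ} {V W d r : E} {a ω K₁ K₂ : ℂ} {x t : ℝ}

lemma schrodinger_modulatedWave (h : DegenerateFay θ V W r K₁ K₂) (hθ : ContDiff ℂ 2 θ)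
    (hz : θ (wavePhase V W d x t) ≠ 0) :
    I * deriv (fun t' => modulatedWave a (translateQuotient θ r) V W d (-K₁) ω x t') t
      + deriv (fun x' => deriv
          (fun x'' => modulatedWave a (translateQuotient θ r) V W d (-K₁) ω x'' t) x') x
      = (2 * fderiv ℂ (logDirDeriv V θ) (wavePhase V W d x t) V + K₂ - ω)
          * modulatedWave a (translateQuotient θ r) V W d (-K₁) ω x t := by
  have hquot := contDiffAt_translateQuotient hθ r hz
  rw [(hasDerivAt_modulatedWave_time (hquot.differentiableAt two_ne_zero)).deriv,
    deriv_deriv_modulatedWave_space hquot]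
  have hlin := h.linearizedFay_eq_zero hθ hz
  simp only [linearizedFay] at hlin
  simp only [modulatedWave]
  set e := exp (I * (-K₁ * x + ω * t))
  set f := translateQuotient θ r
  set z := wavePhase V W d x t
  linear_combination a * (fderiv ℂ f z W + ω * f z) * e * I_sq - a * e * hlin

lemma schrodinger_modulatedWave_of_even (h : DegenerateFay θ V W r K₁ K₂) (hθ : ContDiff ℂ 2 θ)
    (heven : θ.Even) (hz : θ (wavePhase V W d x t) ≠ 0) :
    -I * deriv (fun t' => modulatedWave a (translateQuotient θ (-r)) V W d K₁ ω x t') t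
      + deriv (fun x' => deriv
          (fun x'' => modulatedWave a (translateQuotient θ (-r)) V W d K₁ ω x'' t) x') x
      = (2 * fderiv ℂ (logDirDeriv V θ) (wavePhase V W d x t) V + K₂ + ω)
          * modulatedWave a (translateQuotient θ (-r)) V W d K₁ ω x t := by
  have hquot := contDiffAt_translateQuotient hθ (-r) hz
  rw [(hasDerivAt_modulatedWave_time (hquot.differentiableAt two_ne_zero)).deriv,
    deriv_deriv_modulatedWave_space hquot]
  have hlin := (h.neg heven).linearizedFay_eq_zero hθ hz
  simp only [linearizedFay, fderiv_logDirDeriv_neg, neg_apply, map_neg, neg_neg] at hlin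
  simp only [modulatedWave]
  set e := exp (I * (K₁ * x + ω * t))
  set f := translateQuotient θ (-r)
  set z := wavePhase V W d x t
  linear_combination -a * (fderiv ℂ f z W + ω * f z) * e * I_sq - a * e * hlin

end DegenerateFay

theorem stmt_8_general {ι : Type*} [Fintype ι] {θ : E → ℂ} (hθ : ContDiff ℂ 2 θ)
    (heven : θ.Even) {V₀ W d : E} {V r : ι → E} (hV : ∑ k, V k + V₀ = 0) {K₁ K₂ q₁ q₂ : ι → ℂ}
    (hDF : ∀ j, DegenerateFay θ V₀ W (r j) (K₁ j) (K₂ j))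
    (hBF : ∀ j, BilinearFay θ V₀ (V j) (r j) (q₁ j) (q₂ j)) {A : ι → ℂ} (hA : ∀ j, A j ≠ 0)
    {Z : ℝ → ℝ → E} (hZ : ∀ x t : ℝ, Z x t = (x : ℂ) • I • V₀ + (t : ℂ) • I • W)
    {F : ι → ℂ} (hF : ∀ j, F j = K₂ j - 2 * ∑ k, q₁ k) {ψ ψs : ι → ℝ → ℝ → ℂ}
    (hψ : ∀ j (x t : ℝ), ψ j x t = A j * θ (Z x t - d + r j) / θ (Z x t - d) *
      exp (I * (-(K₁ j * x) + F j * t)))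
    (hψs : ∀ j (x t : ℝ), ψs j x t = (q₂ j / A j) * θ (Z x t - d - r j) / θ (Z x t - d) *
      exp (I * (K₁ j * x - F j * t))) :
    ∀ x t : ℝ, θ (Z x t - d) ≠ 0 → ∀ j,
      (I * deriv (fun t' => ψ j x t') t + deriv (fun x' => deriv (fun x'' => ψ j x'' t) x') x
        + 2 * (∑ k, ψ k x t * ψs k x t) * ψ j x t = 0) ∧
      (-I * deriv (fun t' => ψs j x t') t + deriv (fun x' => deriv (fun x'' => ψs j x'' t) x') x
        + 2 * (∑ k, ψ k x t * ψs k x t) * ψs j x t = 0) := by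
  have hphase (x t : ℝ) : Z x t - d = wavePhase V₀ W d x t := by rw [hZ, wavePhase]
  have hwave : ψ =
      fun j => modulatedWave (A j) (translateQuotient θ (r j)) V₀ W d (-K₁ j) (F j) := by
    funext j x t
    rw [hψ, hphase, modulatedWave, translateQuotient, mul_div_assoc, neg_mul]
  have hwave' : ψs =
      fun j => modulatedWave (q₂ j / A j) (translateQuotient θ (-r j)) V₀ W d (K₁ j) (-F j) := by
    funext j x t
    rw [hψs, hphase, modulatedWave, translateQuotient, mul_div_assoc, neg_mul, ← sub_eq_add_neg,
      ← sub_eq_add_neg]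
  intro x t hz j
  rw [hphase] at hz
  have hpotential : ∑ k, ψ k x t * ψs k x t
      = -fderiv ℂ (logDirDeriv V₀ θ) (wavePhase V₀ W d x t) V₀ - ∑ k, q₁ k := by
    rw [← sum_translateQuotient_mul_translateQuotient_neg hθ hV hBF hz, hwave, hwave']
    refine Finset.sum_congr rfl fun k _ => ?_
    simpa only [neg_neg, mul_div_cancel₀ _ (hA k)] using
      modulatedWave_mul_modulatedWave_neg (a := A k) (b := q₂ k / A k) (k := -K₁ k) (ω := F k)
  rw [hpotential, hwave, hwave']
  constructor
  · linear_combination (hDF j).schrodinger_modulatedWave hθ hz (a := A j) (ω := F j)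
      - modulatedWave (A j) (translateQuotient θ (r j)) V₀ W d (-K₁ j) (F j) x t * hF j
  · linear_combination
      (hDF j).schrodinger_modulatedWave_of_even hθ heven hz (a := q₂ j / A j) (ω := -F j)
      - modulatedWave (q₂ j / A j) (translateQuotient θ (-r j)) V₀ W d (K₁ j) (-F j) x t * hF j

end Schrodinger

/-- theta-functional solutions of the complexified multi-component
nonlinear Schrödinger system. -/
theorem stmt_8 {g n : ℕ} (hg : 1 ≤ g) (hn : 1 ≤ n) (B : Matrix (Fin g) (Fin g) ℂ)
    (hBsymm : B.IsSymm)
    (hBneg : ∀ x : Fin g → ℝ, x ≠ 0 → ∑ i, ∑ j, (B i j).re * x i * x j < 0)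
    (V : Fin (n + 1) → Fin g → ℂ) (hV : ∑ k, V k = 0) (W : Fin g → ℂ)
    (r : Fin n → Fin g → ℂ) (K₁ K₂ q₁ q₂ : Fin n → ℂ)
    (hDF : ∀ j : Fin n, DegFay B (V (Fin.last n)) W (r j) (K₁ j) (K₂ j))
    (hBF : ∀ j : Fin n, BilinFay B (V (Fin.last n)) (V j.castSucc) (r j) (q₁ j) (q₂ j))
    (d : Fin g → ℂ) (A : Fin n → ℂ) (hA : ∀ j, A j ≠ 0)
    (Z : ℝ → ℝ → Fin g → ℂ)
    (hZ : ∀ x t : ℝ, Z x t = fun i => I * V (Fin.last n) i * (x : ℂ) + I * W i * (t : ℂ))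
    (E F : Fin n → ℂ) (hE : ∀ j, E j = K₁ j)
    (hF : ∀ j, F j = K₂ j - 2 * ∑ k, q₁ k)
    (ψ ψs : Fin n → ℝ → ℝ → ℂ)
    (hψ : ∀ (j : Fin n) (x t : ℝ), ψ j x t =
      A j * theta B (Z x t - d + r j) / theta B (Z x t - d) *
        Complex.exp (I * (-(E j * (x : ℂ)) + F j * (t : ℂ))))
    (hψs : ∀ (j : Fin n) (x t : ℝ), ψs j x t =
      (q₂ j / A j) * theta B (Z x t - d - r j) / theta B (Z x t - d) *
        Complex.exp (I * (E j * (x : ℂ) - F j * (t : ℂ)))) :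
    ∀ x t : ℝ, theta B (Z x t - d) ≠ 0 → ∀ j : Fin n,
      (I * deriv (fun t' : ℝ => ψ j x t') t
        + deriv (fun x' : ℝ => deriv (fun x'' : ℝ => ψ j x'' t) x') x
        + 2 * (∑ k, ψ k x t * ψs k x t) * ψ j x t = 0) ∧
      (-I * deriv (fun t' : ℝ => ψs j x t') t
        + deriv (fun x' : ℝ => deriv (fun x'' : ℝ => ψs j x'' t) x') x
        + 2 * (∑ k, ψ k x t * ψs k x t) * ψs j x t = 0) := by
  obtain rfl : E = K₁ := funext hE
  refine stmt_8_general (contDiff_infty.1 (contDiff_theta hBneg) 2) (even_theta B)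
    (by rwa [Fin.sum_univ_castSucc] at hV) hDF hBF hA (fun x t => ?_) hF hψ hψs
  rw [hZ]
  ext i
  simp only [Pi.add_apply, Pi.smul_apply, smul_eq_mul]
  ring
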